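/- Let m ∈ ℕ with m ≥ 1, let a₁,…,a_m ∈ ℕ, let p be a minimal idempotent ultrafilter on ℕ, and let A ∈ a₁·p + ⋯ + a_m·p. Then for every T ∈ 𝒫_f(ℙ) there exist functions α : 𝒫_f(ℕ^ℕ) → ℕ and H : 𝒫_f(ℕ^ℕ) → 𝒫_f(ℕ) such that (1) whenever F ⊊ G in 𝒫_f(ℕ^ℕ), max H(F) < min H(G), and (2) whenever G₁ ⊊ G₂ ⊊ ⋯ is an infinite strictly increasing chain in 𝒫_f(ℕ^ℕ), f_i ∈ G_i for each i ∈ ℕ, P₁,…,P_m ∈ T, and β₁ < ⋯ < β_m are in 𝒫_f(ℕ), then Σ_{l=1}^m a_l·(Σ_{i∈β_l}α(G_i) + P_l(Σ_{i∈β_l}Σ_{t∈H(G_i)}f_i(t))) ∈ A. -/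

import Mathlib

/-!
A minimal idempotent `p` lies in a minimal closed left ideal `L` of `βℕ`. Translation by `1` is a
homeomorphism of `L`, and the resulting `ℤ`-action on `L` is minimal. In a minimal system, any
finitely many polynomial maps `ψ` send some point into a given open set simultaneously, at times
`ψ(∑ t ∈ H, u t)` with `H` as far out as desired: this is colour focusing combined with polynomial
exhaustion (PET) induction on the degree. Applied to the open set `{x ∈ L | A ∈ x}`, it shows that
every member of `p` is a `J_p`-set.

The functions `α` and `H` are then built by recursion along strict inclusion. A partially formed
sum `∑ a_l (x_l + P_l y_l)` leaves a set that the rest of the sum has to hit. If an extension of the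
current block has value `v`, this set is translated by `a_l v`, and, as `p` is idempotent, for
`p`-many `v` the translate can still be hit both by continuing the block and by starting the next
one. At `F` only finitely many partial sums are possible, so a single `J_p`-set contains the values
`v` that are good for all of them.
-/

namespace MultiCST

/-- The sum `p + q` of ultrafilters on ℕ: `A ∈ p + q` iff `{x : {y : x+y ∈ A} ∈ q} ∈ p`. -/
def uAdd (p q : Ultrafilter ℕ) : Ultrafilter ℕ :=
  p.bind fun x => q.map fun y => x + y

/-- `A ⊆ ℕ` is a J-set. -/
def IsJSet (A : Set ℕ) : Prop :=
  ∀ F : Finset (ℕ → ℕ), F.Nonempty →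
    ∃ (a : ℕ) (β : Finset ℕ), β.Nonempty ∧ ∀ f ∈ F, a + ∑ t ∈ β, f t ∈ A

/-- `p ∈ 𝒥`: every member of `p` is a J-set. -/
def MemJ (p : Ultrafilter ℕ) : Prop := ∀ A : Set ℕ, A ∈ p → IsJSet A

/-- `p` is an idempotent ultrafilter. -/
def IdempotentUF (p : Ultrafilter ℕ) : Prop := uAdd p p = p

/-- `p` is a minimal idempotent ultrafilter. -/
def IsMinimalIdempotent (p : Ultrafilter ℕ) : Prop :=
  IdempotentUF p ∧
    ∀ q : Ultrafilter ℕ, IdempotentUF q → uAdd q p = q → uAdd p q = q → q = p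

/-- Tensor product `⊗_{i=1}^m p_i` of ultrafilters on ℕ, as an ultrafilter on `Fin m → ℕ`. -/
def tensor : ∀ m : ℕ, (Fin m → Ultrafilter ℕ) → Ultrafilter (Fin m → ℕ)
  | 0, _ => pure fun i => i.elim0
  | m + 1, p =>
      (p 0).bind fun x => (tensor m fun i => p i.succ).map fun v => Fin.cons x v

/-- `f : ℕ → ℕ` is (given by) a polynomial with coefficients in ℕ and zero constant term. -/
def IsPolyZeroConst (f : ℕ → ℕ) : Prop :=
  ∃ P : Polynomial ℕ, P.coeff 0 = 0 ∧ ∀ x, f x = P.eval x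

/-- The linear combination `a₁·p₁ + a₂·p₂ + ⋯ + a_m·p_m` of ultrafilters on ℕ. -/
def linComb : ∀ m : ℕ, (Fin m → ℕ) → (Fin m → Ultrafilter ℕ) → Ultrafilter ℕ
  | 0, _, _ => pure 0
  | m + 1, a, p =>
      uAdd ((p 0).map fun x => a 0 * x)
        (linComb m (fun i => a i.succ) fun i => p i.succ)

open Filter Set

section PolynomialMaps

variable {V Γ : Type*} [AddMonoid V] [AddCommGroup Γ]

/-- The shift of `φ` by `s`, renormalised to vanish at `0`. -/
def increment (s : V) : (V → Γ) →+ (V → Γ) where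
  toFun φ v := φ (s + v) - φ s
  map_zero' := by ext; simp
  map_add' φ ψ := by ext; simp only [Pi.add_apply]; abel

lemma increment_apply (s : V) (φ : V → Γ) (v : V) : increment s φ v = φ (s + v) - φ s := rfl

lemma increment_increment (s t : V) (φ : V → Γ) :
    increment t (increment s φ) = increment (s + t) φ := by
  ext v; simp [increment_apply, add_assoc]

lemma increment_zero {φ : V → Γ} (h : φ 0 = 0) : increment 0 φ = φ := by
  ext v; simp [increment_apply, h]

variable (V Γ) in
/-- The polynomial maps `V → Γ` of degree at most `d` vanishing at `0`: the maps killed by any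
`d + 1` successive differences, where a difference is taken as `φ(s + v) - φ(s) - φ(v)` so that it
vanishes at `0` again. -/
def polyMap : ℕ → AddSubgroup (V → Γ)
  | 0 => ⊥
  | d + 1 => ⨅ s, (polyMap d).comap (increment s - AddMonoidHom.id _)

lemma mem_polyMap_zero {φ : V → Γ} : φ ∈ polyMap V Γ 0 ↔ φ = 0 := AddSubgroup.mem_bot

lemma mem_polyMap_succ {d : ℕ} {φ : V → Γ} :
    φ ∈ polyMap V Γ (d + 1) ↔ ∀ s, increment s φ - φ ∈ polyMap V Γ d := by
  simp [polyMap, AddSubgroup.mem_iInf]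

lemma polyMap_mono : Monotone (polyMap V Γ) := by
  refine monotone_nat_of_le_succ fun d ↦ ?_
  induction d with
  | zero => exact bot_le
  | succ d ih => exact fun φ hφ ↦ mem_polyMap_succ.2 fun s ↦ ih (mem_polyMap_succ.1 hφ s)

lemma apply_zero_of_mem_polyMap {d : ℕ} {φ : V → Γ} (h : φ ∈ polyMap V Γ d) : φ 0 = 0 := by
  induction d generalizing φ with
  | zero => rw [mem_polyMap_zero.1 h, Pi.zero_apply]
  | succ d ih => simpa [increment_apply] using ih (mem_polyMap_succ.1 h 0)

lemma increment_mem_polyMap {d : ℕ} {φ : V → Γ} (s : V) (h : φ ∈ polyMap V Γ d) :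
    increment s φ ∈ polyMap V Γ d := by
  cases d with
  | zero => simp [mem_polyMap_zero.1 h, zero_mem]
  | succ d =>
    rw [← sub_add_cancel (increment s φ) φ]
    exact add_mem (polyMap_mono d.le_succ (mem_polyMap_succ.1 h s)) h

lemma addMonoidHom_mem_polyMap_one (e : V →+ Γ) : ⇑e ∈ polyMap V Γ 1 :=
  mem_polyMap_succ.2 fun s ↦ mem_polyMap_zero.2 <| by ext v; simp [increment_apply]

lemma addMonoidHom_mul_mem_polyMap (e : V →+ ℤ) {d : ℕ} {φ : V → ℤ} (h : φ ∈ polyMap V ℤ d) :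
    ⇑e * φ ∈ polyMap V ℤ (d + 1) := by
  induction d generalizing φ with
  | zero => rw [mem_polyMap_zero.1 h, mul_zero]; exact zero_mem _
  | succ d ih =>
    refine mem_polyMap_succ.2 fun s ↦ ?_
    have leibniz : increment s (⇑e * φ) - ⇑e * φ =
        ⇑e * (increment s φ - φ) + e s • increment s φ + φ s • ⇑e := by
      ext v
      simp only [increment_apply, Pi.mul_apply, Pi.sub_apply, Pi.add_apply, Pi.smul_apply,
        smul_eq_mul, map_add]
      ring
    rw [leibniz]
    exact add_mem (add_mem (ih (mem_polyMap_succ.1 h s))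
      (zsmul_mem (increment_mem_polyMap s h) _))
      (zsmul_mem (polyMap_mono (by omega) (addMonoidHom_mem_polyMap_one e)) _)

lemma addMonoidHom_pow_mem_polyMap (e : V →+ ℤ) (n : ℕ) :
    ⇑e ^ (n + 1) ∈ polyMap V ℤ (n + 1) := by
  induction n with
  | zero => simpa using addMonoidHom_mem_polyMap_one e
  | succ n ih => rw [pow_succ']; exact addMonoidHom_mul_mem_polyMap e ih

lemma eval_addMonoidHom_mem_polyMap (e : V →+ ℤ) {Q : Polynomial ℤ} (hQ : Q.coeff 0 = 0) :
    (fun v ↦ Q.eval (e v)) ∈ polyMap V ℤ Q.natDegree := by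
  have expand : (fun v ↦ Q.eval (e v)) =
      ∑ i ∈ Finset.range Q.natDegree, Q.coeff (i + 1) • ⇑e ^ (i + 1) := by
    ext v
    simp [Polynomial.eval_eq_sum_range, Finset.sum_range_succ', hQ]
  rw [expand]
  exact sum_mem fun i hi ↦ zsmul_mem
    (polyMap_mono (Finset.mem_range.1 hi) (addMonoidHom_pow_mem_polyMap e i)) _

/-- The maps that differ from some shift of a member of `Θ` by a polynomial map of degree at most
`d`. These are the classes of maps on which the polynomial exhaustion induction runs. -/
def shiftClosure (d : ℕ) (Θ : Set (V → Γ)) : Set (V → Γ) :=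
  {φ | ∃ θ ∈ Θ, ∃ s, φ - increment s θ ∈ polyMap V Γ d}

variable {d : ℕ} {Θ : Set (V → Γ)} {φ : V → Γ}

lemma shiftClosure_empty : shiftClosure d (∅ : Set (V → Γ)) = ∅ := by simp [shiftClosure]

lemma apply_zero_of_mem_shiftClosure (h : φ ∈ shiftClosure d Θ) : φ 0 = 0 := by
  obtain ⟨θ, -, s, h⟩ := h
  simpa [increment_apply] using apply_zero_of_mem_polyMap h

lemma increment_mem_shiftClosure (h : φ ∈ shiftClosure d Θ) (t : V) :
    increment t φ ∈ shiftClosure d Θ := by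
  obtain ⟨θ, hθ, s, h⟩ := h
  refine ⟨θ, hθ, s + t, ?_⟩
  simpa [increment_increment] using increment_mem_polyMap t h

lemma mem_shiftClosure_of_mem (h : φ ∈ Θ) (h0 : φ 0 = 0) : φ ∈ shiftClosure d Θ :=
  ⟨φ, h, 0, by simp [increment_zero h0]⟩

lemma mem_shiftClosure_insert_zero :
    φ ∈ shiftClosure d (insert 0 Θ) ↔ φ ∈ polyMap V Γ d ∨ φ ∈ shiftClosure d Θ := by
  simp [shiftClosure]

lemma shiftClosure_shiftClosure_succ :
    shiftClosure d (shiftClosure (d + 1) Θ) ⊆ shiftClosure (d + 1) Θ := by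
  rintro φ ⟨θ', ⟨θ, hθ, t, hθ'⟩, s, hφ⟩
  refine ⟨θ, hθ, t + s, ?_⟩
  rw [← sub_add_sub_cancel φ (increment s θ'), ← increment_increment, ← map_sub]
  exact add_mem (polyMap_mono d.le_succ hφ) (increment_mem_polyMap s hθ')

lemma sub_mem_shiftClosure_image_sub {h : V → Γ} (hh : h ∈ polyMap V Γ (d + 1))
    (hφ : φ ∈ shiftClosure d Θ) : φ - h ∈ shiftClosure d ((· - h) '' Θ) := by
  obtain ⟨θ, hθ, s, hφ⟩ := hφ
  refine ⟨θ - h, mem_image_of_mem _ hθ, s, ?_⟩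
  have hsplit : φ - h - increment s (θ - h) = φ - increment s θ + (increment s h - h) := by
    rw [map_sub]; abel
  rw [hsplit]
  exact add_mem hφ (mem_polyMap_succ.1 hh s)

end PolynomialMaps

section Recurrence

variable {V Γ X : Type*} [AddCommMonoid V] [AddCommGroup Γ] [AddAction Γ X] [TopologicalSpace X]

variable (X) in
/-- Simultaneous recurrence along the finite sums of `u`: for any finitely many maps `φ` in `Φ`,
every nonempty open set contains `φ(u_H) +ᵥ x` for all of them at once, for some point `x` and
some sum `u_H = ∑ t ∈ H, u t` with `H` arbitrarily far out. -/
def IsRecurrentFamily (u : ℕ → V) (Φ : Set (V → Γ)) : Prop :=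
  ∀ Ψ : Finset (V → Γ), ↑Ψ ⊆ Φ → ∀ U : Set X, IsOpen U → U.Nonempty → ∀ n : ℕ,
    ∃ H : Finset ℕ, H.Nonempty ∧ (∀ t ∈ H, n < t) ∧ ∃ x : X, ∀ ψ ∈ Ψ, ψ (∑ t ∈ H, u t) +ᵥ x ∈ U

variable {u : ℕ → V} {Φ Φ' : Set (V → Γ)}

lemma isRecurrentFamily_empty : IsRecurrentFamily X u (∅ : Set (V → Γ)) := by
  rintro Ψ hΨ U - ⟨x, -⟩ n
  exact ⟨{n + 1}, by simp, by simp, x, fun ψ hψ ↦ (hΨ hψ).elim⟩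

lemma IsRecurrentFamily.mono (h : IsRecurrentFamily X u Φ') (hΦ : Φ ⊆ Φ') :
    IsRecurrentFamily X u Φ :=
  fun Ψ hΨ ↦ h Ψ (hΨ.trans hΦ)

lemma IsRecurrentFamily.of_image_sub (h : V → Γ) (hΦ : IsRecurrentFamily X u ((· - h) '' Φ)) :
    IsRecurrentFamily X u Φ := by
  classical
  intro Ψ hΨ U hU hne n
  obtain ⟨H, hH, hn, x, hx⟩ := hΦ (Ψ.image (· - h))
    (by rw [Finset.coe_image]; exact image_mono hΨ) U hU hne n
  refine ⟨H, hH, hn, -h (∑ t ∈ H, u t) +ᵥ x, fun ψ hψ ↦ ?_⟩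
  simpa [vadd_vadd, sub_eq_add_neg] using hx _ (Finset.mem_image_of_mem _ hψ)

/-- Translating by `-h` turns `h` into `0` without changing degrees. -/
lemma IsRecurrentFamily.shiftClosure_insert {d : ℕ}
    (insert_zero : ∀ Θ : Set (V → Γ), IsRecurrentFamily X u (shiftClosure d Θ) →
      IsRecurrentFamily X u (shiftClosure d (insert 0 Θ)))
    {h : V → Γ} (hh : h ∈ polyMap V Γ (d + 1)) {Θ : Set (V → Γ)}
    (hΘ : IsRecurrentFamily X u (shiftClosure d Θ)) :
    IsRecurrentFamily X u (shiftClosure d (insert h Θ)) := by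
  refine .of_image_sub h <| (insert_zero ((· - h) '' Θ) ?_).mono ?_
  · refine .of_image_sub (-h) <| hΘ.mono ?_
    rintro _ ⟨φ, hφ, rfl⟩
    simpa [image_image] using sub_mem_shiftClosure_image_sub (neg_mem hh) hφ
  · rintro _ ⟨φ, hφ, rfl⟩
    simpa [image_insert_eq] using sub_mem_shiftClosure_image_sub hh hφ

/-- `k` is a colour focused on the open set `W`: all points of `k + ψ(u_H) +ᵥ W`, for `ψ` in `Ψ`
and a suitable `H` beyond `n`, lie in `U`. -/
def IsFocused (u : ℕ → V) (Ψ : Finset (V → Γ)) (U : Set X) (n : ℕ) (W : Set X) (k : Γ) : Prop :=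
  ∃ H : Finset ℕ, H.Nonempty ∧ (∀ t ∈ H, n < t) ∧
    ∀ x ∈ W, ∀ ψ ∈ Ψ, (k + ψ (∑ t ∈ H, u t)) +ᵥ x ∈ U

variable [ContinuousConstVAdd Γ X] {Ψ : Finset (V → Γ)} {U W : Set X} {n : ℕ}

lemma IsRecurrentFamily.exists_isFocused_insert [DecidableEq Γ] (hΦ : IsRecurrentFamily X u Φ)
    (hincr : ∀ φ ∈ Φ, ∀ s, increment s φ ∈ Φ) (hΨ : ↑Ψ ⊆ Φ) (hU : IsOpen U)
    {K : Finset Γ} (hW : IsOpen W) (hK : ∀ k ∈ K, IsFocused u Ψ U n W k)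
    {k : Γ} (hk : ∃ x ∈ W, k +ᵥ x ∈ U) :
    ∃ W' : Set X, IsOpen W' ∧ W'.Nonempty ∧ ∀ l ∈ insert k K, IsFocused u Ψ U n W' l := by
  classical
  choose! S hS hSn hSU using hK
  set W₁ : Set X := W ∩ (k +ᵥ ·) ⁻¹' U
  have hW₁ : IsOpen W₁ := hW.inter (hU.preimage (continuous_const_vadd k))
  let shifts : Finset (V → Γ) :=
    Ψ ∪ (K ×ˢ Ψ).image fun q ↦ increment (∑ t ∈ S q.1, u t) q.2
  have hshifts : ↑shifts ⊆ Φ := by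
    intro ψ hψ
    rcases Finset.mem_union.1 (Finset.mem_coe.1 hψ) with h | h
    · exact hΨ h
    · obtain ⟨q, hq, rfl⟩ := Finset.mem_image.1 h
      exact hincr _ (hΨ (Finset.mem_product.1 hq).2) _
  obtain ⟨N, hN⟩ := (insert n (K.biUnion S)).exists_le
  simp only [Finset.forall_mem_insert, Finset.mem_biUnion] at hN
  obtain ⟨H, hH, hHN, x, hx⟩ := hΦ shifts hshifts W₁ hW₁ hk N
  refine ⟨⋂ ψ ∈ shifts, (ψ (∑ t ∈ H, u t) +ᵥ ·) ⁻¹' W₁,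
    isOpen_biInter_finset fun ψ _ ↦ hW₁.preimage (continuous_const_vadd _),
    ⟨x, mem_iInter₂.2 hx⟩, (Finset.forall_mem_insert _ _ _).2 ⟨?_, fun l hl ↦ ?_⟩⟩
  · refine ⟨H, hH, fun t ht ↦ hN.1.trans_lt (hHN t ht), fun y hy ψ hψ ↦ ?_⟩
    rw [add_vadd]
    exact (mem_iInter₂.1 hy ψ (Finset.mem_union_left _ hψ)).2
  · have hdisj : Disjoint (S l) H := Finset.disjoint_left.2 fun t hs ht ↦
      ((hN.2 t ⟨l, hl, hs⟩).trans_lt (hHN t ht)).false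
    refine ⟨S l ∪ H, (hS l hl).mono Finset.subset_union_left, fun t ht ↦
      (Finset.mem_union.1 ht).elim (hSn l hl t) fun h ↦ hN.1.trans_lt (hHN t h),
      fun y hy ψ hψ ↦ ?_⟩
    have hyW := (mem_iInter₂.1 hy (increment (∑ t ∈ S l, u t) ψ) <| Finset.mem_union_right _ <|
      Finset.mem_image.2 ⟨(l, ψ), Finset.mem_product.2 ⟨hl, hψ⟩, rfl⟩).1
    have hyU := hSU l hl _ hyW ψ hψ
    rwa [vadd_vadd, increment_apply, add_assoc, add_sub_cancel, ← Finset.sum_union hdisj] at hyU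

variable [CompactSpace X] [AddAction.IsMinimal Γ X]

/-- Colour focusing: the colours are the finitely many translates of `U` that cover `X`. A maximal
set of colours focused on one open set `W` contains the colour of some point of `W`. -/
lemma IsRecurrentFamily.insert_zero (hΦ : IsRecurrentFamily X u Φ)
    (hincr : ∀ φ ∈ Φ, ∀ s, increment s φ ∈ Φ) : IsRecurrentFamily X u (insert 0 Φ) := by
  classical
  intro Ψ hΨ U hU hne n
  obtain ⟨K, hK⟩ := isCompact_univ.elim_finite_subcover (fun k : Γ ↦ (k +ᵥ ·) ⁻¹' U)
    (fun k ↦ hU.preimage (continuous_const_vadd k)) (hU.iUnion_preimage_vadd Γ hne).ge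
  let focusable : Finset (Finset Γ) := K.powerset.filter fun K' ↦
    ∃ W : Set X, IsOpen W ∧ W.Nonempty ∧ ∀ k ∈ K', IsFocused u (Ψ.erase 0) U n W k
  obtain ⟨K', hK'⟩ := focusable.exists_maximal
    ⟨∅, Finset.mem_filter.2 ⟨Finset.empty_mem_powerset K, U, hU, hne, by simp⟩⟩
  obtain ⟨hK'K, W, hW, ⟨x, hx⟩, hfoc⟩ := Finset.mem_filter.1 hK'.prop
  obtain ⟨k, hkK, hkx⟩ := mem_iUnion₂.1 (hK (mem_univ x))
  obtain ⟨W', hW', hW'ne, hfoc'⟩ := hΦ.exists_isFocused_insert hincr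
    (fun ψ hψ ↦ (hΨ (Finset.mem_of_mem_erase hψ)).resolve_left (Finset.ne_of_mem_erase hψ))
    hU hW hfoc ⟨x, hx, hkx⟩
  have hk : k ∈ K' := hK'.le_of_ge (Finset.mem_filter.2 ⟨Finset.mem_powerset.2 <|
    Finset.insert_subset hkK (Finset.mem_powerset.1 hK'K), W', hW', hW'ne, hfoc'⟩)
    (Finset.subset_insert k K') (Finset.mem_insert_self k K')
  obtain ⟨H, hH, hHn, hHU⟩ := hfoc k hk
  refine ⟨H, hH, hHn, k +ᵥ x, fun ψ hψ ↦ ?_⟩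
  by_cases h0 : ψ = 0
  · simpa [h0] using hkx
  · rw [vadd_vadd, add_comm]
    exact hHU x hx ψ (Finset.mem_erase.2 ⟨h0, hψ⟩)

/-- Going from degree `d` to `d + 1`: of the finitely many maps considered, those of degree at most
`d + 1` are adjoined one by one, each as a single further map up to degree `d`. -/
lemma IsRecurrentFamily.shiftClosure_insert_zero {d : ℕ} {Θ : Set (V → Γ)}
    (hΘ : IsRecurrentFamily X u (shiftClosure d Θ)) :
    IsRecurrentFamily X u (shiftClosure d (insert 0 Θ)) := by
  induction d generalizing Θ with
  | zero =>
    refine (hΘ.insert_zero fun φ hφ ↦ increment_mem_shiftClosure hφ).mono fun φ hφ ↦ ?_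
    exact (mem_shiftClosure_insert_zero.1 hφ).imp_left mem_polyMap_zero.1
  | succ d ih =>
    have add_finite (L : Set (V → Γ)) (hL : L.Finite) (hLd : L ⊆ polyMap V Γ (d + 1)) :
        IsRecurrentFamily X u (shiftClosure d (L ∪ shiftClosure (d + 1) Θ)) := by
      induction L, hL using Set.Finite.induction_on with
      | empty => simpa using hΘ.mono shiftClosure_shiftClosure_succ
      | insert _ _ ihL =>
        rw [insert_subset_iff] at hLd
        rw [insert_union]
        exact .shiftClosure_insert (fun _ ↦ ih) hLd.1 (ihL hLd.2)
    intro Ψ hΨ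
    refine add_finite (↑Ψ ∩ polyMap V Γ (d + 1)) (Ψ.finite_toSet.inter_of_left _)
      inter_subset_right Ψ fun ψ hψ ↦ ?_
    rcases mem_shiftClosure_insert_zero.1 (hΨ hψ) with h | h
    · exact mem_shiftClosure_of_mem (.inl ⟨hψ, h⟩) (apply_zero_of_mem_polyMap h)
    · exact mem_shiftClosure_of_mem (.inr h) (apply_zero_of_mem_shiftClosure h)

theorem isRecurrentFamily_polyMap (d : ℕ) :
    IsRecurrentFamily X u (polyMap V Γ d : Set (V → Γ)) := by
  have hempty : IsRecurrentFamily X u (shiftClosure d (∅ : Set (V → Γ))) := by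
    rw [shiftClosure_empty]
    exact isRecurrentFamily_empty
  exact hempty.shiftClosure_insert_zero.mono fun φ hφ ↦ mem_shiftClosure_insert_zero.2 (.inl hφ)

end Recurrence

section ClosedLeftIdeals

variable {M : Type*} [AddSemigroup M] [TopologicalSpace M]

/-- A nonempty closed left ideal of an additive semigroup with a topology. -/
structure IsClosedLeftIdeal (L : Set M) : Prop where
  isClosed : IsClosed L
  nonempty : L.Nonempty
  add_mem (r : M) {q : M} : q ∈ L → r + q ∈ L

variable [CompactSpace M] {L : Set M}

lemma IsClosedLeftIdeal.exists_minimal_subset (hL : IsClosedLeftIdeal L) :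
    ∃ L' ⊆ L, Minimal IsClosedLeftIdeal L' := by
  refine zorn_superset_nonempty {L : Set M | IsClosedLeftIdeal L} (fun c hc hchain hne ↦ ?_) L hL
  have : Nonempty c := hne.to_subtype
  refine ⟨⋂₀ c, ⟨isClosed_sInter fun s hs ↦ (hc hs).isClosed, ?_,
    fun r q hq ↦ mem_sInter.2 fun s hs ↦ (hc hs).add_mem r (hq s hs)⟩, fun s ↦ sInter_subset_of_mem⟩
  exact IsCompact.nonempty_sInter_of_directed_nonempty_isCompact_isClosed
    (show IsChain (· ⊇ ·) c from hchain.symm).directedOn (fun s hs ↦ (hc hs).nonempty)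
    (fun s hs ↦ (hc hs).isClosed.isCompact) fun s hs ↦ (hc hs).isClosed

variable [T2Space M]

lemma isClosedLeftIdeal_range_add_right (hM : ∀ r : M, Continuous (· + r)) (q : M) :
    IsClosedLeftIdeal (range (· + q)) where
  isClosed := (isCompact_range (hM q)).isClosed
  nonempty := ⟨q + q, q, rfl⟩
  add_mem := by
    rintro r _ ⟨x, rfl⟩
    exact ⟨r + x, add_assoc r x q⟩

lemma range_add_right_eq_of_minimal (hM : ∀ r : M, Continuous (· + r))
    (hL : Minimal IsClosedLeftIdeal L) {q : M} (hq : q ∈ L) : range (· + q) = L :=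
  hL.eq_of_subset (isClosedLeftIdeal_range_add_right hM q)
    (range_subset_iff.2 fun r ↦ hL.prop.add_mem r hq)

lemma IsClosedLeftIdeal.exists_idempotent (hM : ∀ r : M, Continuous (· + r))
    (hL : IsClosedLeftIdeal L) : ∃ e ∈ L, e + e = e :=
  exists_idempotent_in_compact_add_subsemigroup hM L hL.nonempty hL.isClosed.isCompact
    fun x _ _ hy ↦ hL.add_mem x hy

lemma exists_minimal_closedLeftIdeal_mem (hM : ∀ r : M, Continuous (· + r)) {p : M}
    (hp : p + p = p) (hmin : ∀ q, q + q = q → q + p = q → p + q = q → q = p) :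
    ∃ L : Set M, Minimal IsClosedLeftIdeal L ∧ p ∈ L := by
  obtain ⟨L, hLp, hL⟩ := (isClosedLeftIdeal_range_add_right hM p).exists_minimal_subset
  obtain ⟨e, heL, he⟩ := hL.prop.exists_idempotent hM
  have hep : e + p = e := by
    obtain ⟨x, rfl⟩ := hLp heL
    rw [add_assoc, hp]
  have hpe : p + e = p := by
    refine hmin (p + e) ?_ (by rw [add_assoc, hep]) (by rw [← add_assoc, hp])
    rw [add_assoc, ← add_assoc e, hep, he]
  exact ⟨L, hL, hpe ▸ hL.prop.add_mem p heL⟩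

lemma exists_homeomorph_add_central (hM : ∀ r : M, Continuous (· + r))
    (hL : Minimal IsClosedLeftIdeal L) {c : M} (hc : ∀ q, c + q = q + c) :
    ∃ T : L ≃ₜ L, ∀ x, (T x : M) = c + x := by
  have hcont : Continuous (c + ·) := by simpa only [hc] using hM c
  have hmaps : MapsTo (c + ·) L L := fun q hq ↦ hL.prop.add_mem c hq
  have himage : (c + ·) '' L = L := by
    refine hL.eq_of_subset ⟨(hL.prop.isClosed.isCompact.image hcont).isClosed,
      hL.prop.nonempty.image _, ?_⟩ hmaps.image_subset
    rintro r _ ⟨q, hq, rfl⟩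
    exact ⟨r + q, hL.prop.add_mem r hq, by simp only [← add_assoc, hc r]⟩
  have hinj : InjOn (c + ·) L := by
    obtain ⟨e, heL, he⟩ := hL.prop.exists_idempotent hM
    obtain ⟨d, -, hd⟩ := himage.ge heL
    have cancel {q : M} (hq : q ∈ L) : c + q + d = q := by
      obtain ⟨x, rfl⟩ := (range_add_right_eq_of_minimal hM hL heL).ge hq
      dsimp only at hd ⊢
      rw [hc, add_assoc, hd, add_assoc, he]
    intro q hq r hr hqr
    rw [← cancel hq, ← cancel hr]
    exact congrArg (· + d) hqr
  have : CompactSpace L := isCompact_iff_compactSpace.1 hL.prop.isClosed.isCompact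
  have hbij : BijOn (c + ·) L L := ⟨hmaps, hinj, himage.ge⟩
  exact ⟨Continuous.homeoOfEquivCompactToT2 (f := hbij.equiv) (hcont.restrict hmaps), fun _ ↦ rfl⟩

end ClosedLeftIdeals

/-- The action of `ℤ` on a space through the powers of a homeomorphism. -/
abbrev zpowAddAction {X : Type*} [TopologicalSpace X] (T : X ≃ₜ X) : AddAction ℤ X where
  vadd n x := (T ^ n) x
  zero_vadd _ := rfl
  add_vadd m n x := by
    change (T ^ (m + n)) x = (T ^ m) ((T ^ n) x)
    rw [zpow_add]
    rfl

section Ultrafilters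

attribute [local instance] Ultrafilter.addSemigroup

lemma mem_add_iff {p q : Ultrafilter ℕ} {A : Set ℕ} :
    A ∈ p + q ↔ ∀ᶠ x in p, ∀ᶠ y in q, x + y ∈ A :=
  Ultrafilter.eventually_add p q (· ∈ A)

lemma pure_add_comm (k : ℕ) (q : Ultrafilter ℕ) : pure k + q = q + pure k := by
  ext A
  simp [mem_add_iff, add_comm]

/-- The translation by `1` is invertible on `L`, and `q ↦ q + x` maps `βℕ` onto `L` for every `x`
in `L`, so the dense set `ℕ` of `βℕ` is carried to a dense orbit. -/
lemma exists_minimal_int_action {L : Set (Ultrafilter ℕ)} (hL : Minimal IsClosedLeftIdeal L) :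
    ∃ _ : AddAction ℤ L, ContinuousConstVAdd ℤ L ∧ AddAction.IsMinimal ℤ L ∧
      ∀ (k : ℕ) (x : L), ↑((k : ℤ) +ᵥ x) = pure k + (x : Ultrafilter ℕ) := by
  obtain ⟨T, hT⟩ := exists_homeomorph_add_central Ultrafilter.continuous_add_left hL
    (pure_add_comm 1)
  have hpow (k : ℕ) (x : L) : ((T ^ (k : ℤ)) x : Ultrafilter ℕ) = pure k + x := by
    induction k with
    | zero =>
      ext A
      simp [mem_add_iff]
    | succ k ih =>
      rw [Nat.cast_succ, add_comm, zpow_one_add, Homeomorph.mul_apply, hT, ih, ← add_assoc]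
      congr 1
      ext A
      simp [mem_add_iff, add_comm]
  let _ : AddAction ℤ L := zpowAddAction T
  refine ⟨inferInstance, ⟨fun n ↦ (T ^ n).continuous⟩, ⟨fun x ↦ ?_⟩, hpow⟩
  let toL (r : Ultrafilter ℕ) : L := ⟨r + x, hL.prop.add_mem r x.2⟩
  have hsurj : Function.Surjective toL := fun ⟨q, hq⟩ ↦ by
    obtain ⟨r, rfl⟩ := (range_add_right_eq_of_minimal Ultrafilter.continuous_add_left hL x.2).ge hq
    exact ⟨r, rfl⟩
  have hcont : Continuous toL := (Ultrafilter.continuous_add_left x.1).subtype_mk _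
  refine (hsurj.denseRange.comp denseRange_pure hcont).mono ?_
  rintro _ ⟨k, rfl⟩
  exact ⟨(k : ℤ), Subtype.ext (hpow k x)⟩

end Ultrafilters

section PolyJSets

attribute [local instance] Ultrafilter.addSemigroup

lemma IsPolyZeroConst.exists_mem_polyMap {P : ℕ → ℕ} (hP : IsPolyZeroConst P) {V : Type*}
    [AddMonoid V] (e : V →+ ℤ) :
    ∃ d, ∃ φ ∈ polyMap V ℤ d, ∀ (v : V) (n : ℕ), e v = n → φ v = P n := by
  obtain ⟨Q, hQ0, hQ⟩ := hP
  refine ⟨_, _, eval_addMonoidHom_mem_polyMap e (Q := Q.map (Nat.castRingHom ℤ)) (by simp [hQ0]),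
    fun v n hn ↦ ?_⟩
  simp [hn, hQ, Polynomial.eval_natCast_map]

/-- `A` is a `J_p`-set: the polynomial analogue of a J-set, in which finitely many polynomials are
applied to the finite sums of finitely many sequences at once. -/
def IsPolyJSet (A : Set ℕ) : Prop :=
  ∀ T F : Finset (ℕ → ℕ), (∀ P ∈ T, IsPolyZeroConst P) →
    ∃ (a : ℕ) (β : Finset ℕ), β.Nonempty ∧ ∀ P ∈ T, ∀ f ∈ F, a + P (∑ t ∈ β, f t) ∈ A

lemma IsPolyJSet.exists_gt {A : Set ℕ} (hA : IsPolyJSet A) {T : Finset (ℕ → ℕ)}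
    (hT : ∀ P ∈ T, IsPolyZeroConst P) (F : Finset (ℕ → ℕ)) (n : ℕ) :
    ∃ (a : ℕ) (β : Finset ℕ), β.Nonempty ∧ (∀ t ∈ β, n < t) ∧
      ∀ P ∈ T, ∀ f ∈ F, a + P (∑ t ∈ β, f t) ∈ A := by
  classical
  obtain ⟨a, β, hβ, h⟩ := hA T (F.image fun f t ↦ f (t + (n + 1))) hT
  refine ⟨a, β.map (addRightEmbedding (n + 1)), hβ.map, ?_, fun P hP f hf ↦ ?_⟩
  · simp only [Finset.forall_mem_map, addRightEmbedding_apply]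
    omega
  · simpa using h P hP _ (Finset.mem_image_of_mem _ hf)

theorem IsMinimalIdempotent.isPolyJSet {p : Ultrafilter ℕ} (hp : IsMinimalIdempotent p)
    {A : Set ℕ} (hA : A ∈ p) : IsPolyJSet A := by
  classical
  intro T F hT
  obtain ⟨L, hL, hpL⟩ := exists_minimal_closedLeftIdeal_mem (M := Ultrafilter ℕ)
    Ultrafilter.continuous_add_left hp.1 hp.2
  have : CompactSpace L := isCompact_iff_compactSpace.1 hL.prop.isClosed.isCompact
  obtain ⟨_, _, _, hvadd⟩ := exists_minimal_int_action hL
  have hpoly (q : T × F) := (hT q.1 q.1.2).exists_mem_polyMap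
    (Pi.evalAddMonoidHom (fun _ : ℕ → ℕ ↦ ℤ) q.2)
  choose d φ hφ heval using hpoly
  obtain ⟨β, hβ, -, x, hx⟩ := isRecurrentFamily_polyMap (X := L) (u := fun t f ↦ (f t : ℤ))
    (Finset.univ.sup d) (Finset.univ.image φ)
    (by
      simp only [Finset.coe_image, Finset.coe_univ, image_univ, range_subset_iff]
      exact fun q ↦ polyMap_mono (Finset.le_sup (Finset.mem_univ q)) (hφ q))
    {x | A ∈ x.1} ((ultrafilter_isOpen_basic A).preimage continuous_subtype_val) ⟨⟨p, hpL⟩, hA⟩ 0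
  have hx' (q : T × F) : ∀ᶠ y in (x : Ultrafilter ℕ), q.1.1 (∑ t ∈ β, q.2.1 t) + y ∈ A := by
    have := hx (φ q) (Finset.mem_image_of_mem φ (Finset.mem_univ q))
    rw [heval q _ (∑ t ∈ β, q.2.1 t) (by simp), mem_ofPred_eq, hvadd, mem_add_iff] at this
    exact this
  obtain ⟨a, ha⟩ := (eventually_all.2 hx').exists
  exact ⟨a, β, hβ, fun P hP f hf ↦ add_comm a _ ▸ ha (⟨P, hP⟩, ⟨f, hf⟩)⟩

end PolyJSets

section Tasks

lemma IsPolyZeroConst.monotone {P : ℕ → ℕ} (hP : IsPolyZeroConst P) : Monotone P := by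
  obtain ⟨Q, -, hQ⟩ := hP
  intro x y hxy
  simp only [hQ, Polynomial.eval_eq_sum_range]
  gcongr

lemma IsPolyZeroConst.increment {P : ℕ → ℕ} (hP : IsPolyZeroConst P) (y : ℕ) :
    IsPolyZeroConst fun z ↦ P (y + z) - P y := by
  obtain ⟨Q, -, hQ⟩ := hP
  set R := Q.comp (.X + .C y)
  refine ⟨R.divX * .X, by simp, fun z ↦ ?_⟩
  have hR0 : R.coeff 0 = P y := by simp [R, hQ, Polynomial.coeff_zero_eq_eval_zero]
  have hR : R.eval z = P (y + z) := by simp [R, hQ, add_comm]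
  calc P (y + z) - P y = (R.divX * .X + .C (R.coeff 0)).eval z - R.coeff 0 := by
        rw [R.divX_mul_X_add, hR, hR0]
    _ = (R.divX * .X).eval z := by simp

lemma mem_linComb_succ {k : ℕ} {a : Fin (k + 1) → ℕ} {p : Ultrafilter ℕ} {A : Set ℕ} :
    A ∈ linComb (k + 1) a (fun _ ↦ p) ↔
      ∀ᶠ v in p, (a 0 * v + ·) ⁻¹' A ∈ linComb k (fun i ↦ a i.succ) fun _ ↦ p :=
  Iff.rfl

lemma IdempotentUF.eventually_mem_linComb_succ {k : ℕ} {a : Fin (k + 1) → ℕ} {p : Ultrafilter ℕ}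
    (hp : IdempotentUF p) {A : Set ℕ} (hA : A ∈ linComb (k + 1) a fun _ ↦ p) :
    ∀ᶠ v in p, (a 0 * v + ·) ⁻¹' A ∈ linComb (k + 1) a fun _ ↦ p := by
  have hadd : {v | (a 0 * v + ·) ⁻¹' A ∈ linComb k (fun i ↦ a i.succ) fun _ ↦ p} ∈ uAdd p p := by
    rw [hp]
    exact mem_linComb_succ.1 hA
  have hadd' : ∀ᶠ v in p, ∀ᶠ w in p,
      (a 0 * (v + w) + ·) ⁻¹' A ∈ linComb k (fun i ↦ a i.succ) fun _ ↦ p := hadd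
  refine hadd'.mono fun v hv ↦ mem_linComb_succ.2 <| hv.mono fun w hw ↦ ?_
  simpa only [preimage_preimage, mul_add, add_assoc] using hw

/-- The state of a linear combination `∑ a_l (x_l + P_l y_l)` that is being built up block by block:
`coeff` lists the coefficients of the current block and of the blocks after it, and the rest of the
sum, with `poly` in place of the polynomial of the current block, still has to land in `target`. -/
structure Task where
  blocks : ℕ
  coeff : Fin blocks → ℕ
  target : Set ℕ
  poly : ℕ → ℕ

/-- The task can be completed along `p`. -/
def Task.Valid (p : Ultrafilter ℕ) (σ : Task) : Prop :=
  σ.target ∈ linComb σ.blocks σ.coeff (fun _ ↦ p) ∧ IsPolyZeroConst σ.poly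

/-- The tasks that may follow when the current block has been extended by `x` and `y`: either
the block goes on, or a new block starts with a polynomial from `T`. -/
def Task.next (T : Finset (ℕ → ℕ)) (x y : ℕ) : Task → Set Task
  | ⟨0, _, _, _⟩ => ∅
  | ⟨k + 1, a, A, Q⟩ =>
    insert ⟨k + 1, a, (a 0 * (x + Q y) + ·) ⁻¹' A, fun z ↦ Q (y + z) - Q y⟩
      ((fun P ↦ ⟨k, fun i ↦ a i.succ, (a 0 * (x + Q y) + ·) ⁻¹' A, P⟩) '' T)

variable {T : Finset (ℕ → ℕ)} {p : Ultrafilter ℕ}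

lemma Task.finite_next (σ : Task) (x y : ℕ) : (σ.next T x y).Finite := by
  obtain ⟨_ | k, a, A, Q⟩ := σ
  · exact finite_empty
  · exact (T.finite_toSet.image _).insert _

lemma Task.next_add {k : ℕ} {a : Fin (k + 1) → ℕ} {A : Set ℕ} {Q : ℕ → ℕ} (hQ : Monotone Q)
    (x y x' y' : ℕ) :
    next T (x + x') (y + y') ⟨k + 1, a, A, Q⟩ =
      next T x' y' ⟨k + 1, a, (a 0 * (x + Q y) + ·) ⁻¹' A, fun z ↦ Q (y + z) - Q y⟩ := by
  have hle : Q y ≤ Q (y + y') := hQ (Nat.le_add_right y y')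
  have hvalue : x + x' + Q (y + y') = x + Q y + (x' + (Q (y + y') - Q y)) := by omega
  have hpoly : (fun z ↦ Q (y + y' + z) - Q (y + y')) =
      fun z ↦ Q (y + (y' + z)) - Q y - (Q (y + y') - Q y) := by
    ext z
    rw [add_assoc, Nat.sub_sub_sub_cancel_right hle]
  rw [next, next, hvalue, hpoly]
  simp only [preimage_preimage, mul_add, add_assoc]

lemma Task.Valid.eventually_next (hp : IdempotentUF p) (hT : ∀ P ∈ T, IsPolyZeroConst P)
    {σ : Task} (hσ : σ.Valid p) :
    ∀ᶠ v in p, ∀ x y, x + σ.poly y = v → ∀ τ ∈ σ.next T x y, τ.Valid p := by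
  obtain ⟨_ | k, a, A, Q⟩ := σ
  · exact .of_forall fun v x y _ τ hτ ↦ hτ.elim
  · filter_upwards [hp.eventually_mem_linComb_succ hσ.1, mem_linComb_succ.1 hσ.1]
    rintro _ hgo hmove x y rfl τ (rfl | ⟨P, hP, rfl⟩)
    · exact ⟨hgo, hσ.2.increment y⟩
    · exact ⟨hmove, hT P hP⟩

lemma exists_forall_next_valid (hp : IdempotentUF p) (hJ : ∀ B ∈ p, IsPolyJSet B)
    (hT : ∀ P ∈ T, IsPolyZeroConst P) {R : Set Task} (hRfin : R.Finite)
    (hR : ∀ σ ∈ R, σ.Valid p) (F : Finset (ℕ → ℕ)) (n : ℕ) :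
    ∃ (x : ℕ) (H : Finset ℕ), H.Nonempty ∧ (∀ t ∈ H, n < t) ∧
      ∀ σ ∈ R, ∀ f ∈ F, ∀ τ ∈ σ.next T x (∑ t ∈ H, f t), τ.Valid p := by
  classical
  have hB : ∀ᶠ v in p, ∀ σ ∈ R, ∀ x y, x + σ.poly y = v → ∀ τ ∈ σ.next T x y, τ.Valid p :=
    (eventually_all_finite hRfin).2 fun σ hσ ↦ (hR σ hσ).eventually_next hp hT
  obtain ⟨x, H, hH, hn, hx⟩ := (hJ _ hB).exists_gt (T := hRfin.toFinset.image Task.poly)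
    (by simpa using fun σ hσ ↦ (hR σ hσ).2) F n
  exact ⟨x, H, hH, hn, fun σ hσ f hf ↦ hx σ.poly
    (Finset.mem_image_of_mem _ (hRfin.mem_toFinset.2 hσ)) f hf σ hσ x _ rfl⟩

variable {x y : ℕ → ℕ} {S : ℕ → Set Task}

lemma Task.next_sum_subset (hmono : Monotone S)
    (hnext : ∀ i, ∀ σ ∈ S i, σ.next T (x i) (y i) ⊆ S (i + 1))
    {k : ℕ} {a : Fin (k + 1) → ℕ} {A : Set ℕ} {Q : ℕ → ℕ} (hQ : Monotone Q)
    {β : Finset ℕ} (hβ : β.Nonempty) (hσ : ∀ i ∈ β, ⟨k + 1, a, A, Q⟩ ∈ S i)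
    {n : ℕ} (hn : ∀ i ∈ β, i < n) :
    next T (∑ i ∈ β, x i) (∑ i ∈ β, y i) ⟨k + 1, a, A, Q⟩ ⊆ S n := by
  induction β using Finset.induction_on_max generalizing n with
  | empty => exact absurd hβ Finset.not_nonempty_empty
  | insert b β hlt ih =>
    have hb : b ∉ β := fun h ↦ (hlt b h).false
    rw [Finset.forall_mem_insert] at hσ hn
    rw [Finset.sum_insert hb, Finset.sum_insert hb, add_comm, add_comm (y b)]
    refine subset_trans ?_ (hmono hn.1)
    obtain rfl | hβ' := β.eq_empty_or_nonempty
    · simpa using hnext b _ hσ.1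
    · rw [next_add hQ]
      exact hnext b _ (ih hβ' hσ.2 hlt (mem_insert _ _))

lemma Task.sum_mem_target (hmono : Monotone S)
    (hnext : ∀ i, ∀ σ ∈ S i, σ.next T (x i) (y i) ⊆ S (i + 1))
    (hvalid : ∀ i, ∀ σ ∈ S i, σ.Valid p) (hT : T.Nonempty)
    {k n : ℕ} {a : Fin k → ℕ} {A : Set ℕ} (hA : ∀ Q ∈ T, ⟨k, a, A, Q⟩ ∈ S n)
    {P : Fin k → ℕ → ℕ} (hP : ∀ l, P l ∈ T) {β : Fin k → Finset ℕ} (hβ : ∀ l, (β l).Nonempty)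
    (hβn : ∀ l, ∀ i ∈ β l, n ≤ i) (hββ : ∀ l l', l < l' → ∀ i ∈ β l, ∀ j ∈ β l', i < j) :
    ∑ l, a l * (∑ i ∈ β l, x i + P l (∑ i ∈ β l, y i)) ∈ A := by
  induction k generalizing n A with
  | zero =>
    obtain ⟨Q, hQ⟩ := hT
    exact (hvalid n _ (hA Q hQ)).1
  | succ k ih =>
    have hmem : ⟨k + 1, a, A, P 0⟩ ∈ S n := hA _ (hP 0)
    have hnext0 := next_sum_subset hmono hnext (hvalid n _ hmem).2.monotone (hβ 0)
      (fun i hi ↦ hmono (hβn 0 i hi) hmem) (n := (β 0).max' (hβ 0) + 1)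
      fun i hi ↦ Nat.lt_succ_of_le ((β 0).le_max' i hi)
    rw [Fin.sum_univ_succ]
    exact ih (fun Q hQ ↦ hnext0 (mem_insert_of_mem _ (mem_image_of_mem _ hQ)))
      (fun l ↦ hP l.succ) (fun l ↦ hβ l.succ)
      (fun l i hi ↦ hββ 0 l.succ l.succ_pos _ ((β 0).max'_mem (hβ 0)) i hi)
      fun l l' hl ↦ hββ l.succ l'.succ (Fin.succ_lt_succ_iff.2 hl)

end Tasks

section Stages

lemma exists_fun_forall_image_Iio {ι Y : Type*} [Preorder ι] [LocallyFiniteOrderBot ι]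
    [WellFoundedLT ι] {Q : Y → Prop} {R : ι → Set Y → Y → Prop}
    (h : ∀ i (s : Set Y), s.Finite → (∀ z ∈ s, Q z) → ∃ y, Q y ∧ R i s y) :
    ∃ g : ι → Y, ∀ i, Q (g i) ∧ R i (g '' Iio i) (g i) := by
  obtain _ | ⟨⟨i₀⟩⟩ := isEmpty_or_nonempty ι
  · exact ⟨isEmptyElim, isEmptyElim⟩
  have : Nonempty Y := (h i₀ ∅ finite_empty (by simp)).nonempty
  choose! pick hQ hR using h
  let g : ι → Y := wellFounded_lt.fix fun i prev ↦ pick i (range fun j : Iio i ↦ prev j j.2)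
  have hg (i : ι) : g i = pick i (g '' Iio i) := by
    rw [image_eq_range]
    exact wellFounded_lt.fix_eq _ i
  have hgQ (i : ι) : Q (g i) := by
    induction i using WellFoundedLT.induction with
    | _ i ih => exact hg i ▸ hQ i _ ((finite_Iio i).image g) (forall_mem_image.2 ih)
  exact ⟨g, fun i ↦ ⟨hgQ i, by
    conv => rhs; rw [hg i]
    exact hR i _ ((finite_Iio i).image g) (forall_mem_image.2 fun j _ ↦ hgQ j)⟩⟩

/-- The choices `α(F)` and `H(F)` made at a finite set `F` of sequences, together with the tasks
that can have been reached once they are made. -/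
structure Stage where
  shift : ℕ
  support : Finset ℕ
  reached : Set Task

/-- A stage with nonempty support that reaches only finitely many tasks, all of them valid. -/
structure Stage.IsSound (p : Ultrafilter ℕ) (s : Stage) : Prop where
  support_nonempty : s.support.Nonempty
  finite_reached : s.reached.Finite
  valid {τ : Task} : τ ∈ s.reached → τ.Valid p

/-- The stage `s` at `F` lies beyond all `previous` stages, and it reaches every task that follows
an initial task or a previously reached one when its block is extended along a member of `F`. -/
structure Stage.Follows (T : Finset (ℕ → ℕ)) (initial : Set Task) (F : Finset (ℕ → ℕ))
    (previous : Set Stage) (s : Stage) : Prop where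
  lt : ∀ r ∈ previous, ∀ i ∈ r.support, ∀ j ∈ s.support, i < j
  next_subset : ∀ σ ∈ initial ∪ ⋃ r ∈ previous, r.reached, ∀ f ∈ F,
    σ.next T s.shift (∑ t ∈ s.support, f t) ⊆ s.reached

variable {p : Ultrafilter ℕ} {T : Finset (ℕ → ℕ)} {I : Set Task}

lemma exists_stage_follows (hp : IdempotentUF p) (hJ : ∀ B ∈ p, IsPolyJSet B)
    (hT : ∀ P ∈ T, IsPolyZeroConst P) (hIfin : I.Finite) (hI : ∀ σ ∈ I, σ.Valid p)
    (F : Finset (ℕ → ℕ)) {prev : Set Stage} (hfin : prev.Finite)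
    (hprev : ∀ r ∈ prev, r.IsSound p) :
    ∃ s : Stage, s.IsSound p ∧ s.Follows T I F prev := by
  set R : Set Task := I ∪ ⋃ r ∈ prev, r.reached
  have hRfin : R.Finite := hIfin.union (hfin.biUnion fun r hr ↦ (hprev r hr).finite_reached)
  have hR : ∀ σ ∈ R, σ.Valid p := by
    rintro σ (hσ | hσ)
    · exact hI σ hσ
    · obtain ⟨r, hr, hσ⟩ := mem_iUnion₂.1 hσ
      exact (hprev r hr).valid hσ
  obtain ⟨n, hn⟩ := (hfin.biUnion fun r _ ↦ r.support.finite_toSet).bddAbove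
  obtain ⟨x, H, hH, hHn, hx⟩ := exists_forall_next_valid hp hJ hT hRfin hR F n
  refine ⟨⟨x, H, ⋃ σ ∈ R, ⋃ f ∈ F, σ.next T x (∑ t ∈ H, f t)⟩, ⟨hH, ?_, ?_⟩, ⟨?_, ?_⟩⟩
  · exact hRfin.biUnion fun σ _ ↦ F.finite_toSet.biUnion fun f _ ↦ σ.finite_next _ _
  · simp only [mem_iUnion]
    rintro τ ⟨σ, hσ, f, hf, hτ⟩
    exact hx σ hσ f hf τ hτ
  · exact fun r hr i hi j hj ↦ (hn (mem_biUnion hr hi)).trans_lt (hHn j hj)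
  · exact fun σ hσ f hf τ hτ ↦ mem_iUnion₂.2 ⟨σ, hσ, mem_iUnion₂.2 ⟨f, hf, hτ⟩⟩

lemma exists_stages (hp : IdempotentUF p) (hJ : ∀ B ∈ p, IsPolyJSet B)
    (hT : ∀ P ∈ T, IsPolyZeroConst P) (hIfin : I.Finite) (hI : ∀ σ ∈ I, σ.Valid p) :
    ∃ g : Finset (ℕ → ℕ) → Stage, ∀ F, (g F).IsSound p ∧ (g F).Follows T I F (g '' Iio F) := by
  classical
  exact exists_fun_forall_image_Iio fun F _ hfin hprev ↦
    exists_stage_follows hp hJ hT hIfin hI F hfin hprev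

lemma sum_mem_target_of_follows {g : Finset (ℕ → ℕ) → Stage} (hI : ∀ σ ∈ I, σ.Valid p)
    (hsound : ∀ F, (g F).IsSound p) (hfollows : ∀ F, (g F).Follows T I F (g '' Iio F))
    (hT : T.Nonempty) {G : ℕ → Finset (ℕ → ℕ)} (hG : StrictMono G) {f : ℕ → ℕ → ℕ}
    (hf : ∀ i, f i ∈ G i) {k : ℕ} {a : Fin k → ℕ} {A : Set ℕ} (hA : ∀ Q ∈ T, ⟨k, a, A, Q⟩ ∈ I)
    {P : Fin k → ℕ → ℕ} (hP : ∀ l, P l ∈ T) {β : Fin k → Finset ℕ} (hβ : ∀ l, (β l).Nonempty)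
    (hββ : ∀ l l', l < l' → ∀ i ∈ β l, ∀ j ∈ β l', i < j) :
    ∑ l, a l * (∑ i ∈ β l, (g (G i)).shift +
      P l (∑ i ∈ β l, ∑ t ∈ (g (G i)).support, f i t)) ∈ A := by
  let S (i : ℕ) : Set Task := I ∪ ⋃ r ∈ g '' Iio (G i), r.reached
  have hmono : Monotone S := fun i j hij ↦ union_subset_union_right _ <|
    biUnion_subset_biUnion_left <| image_mono <| Iio_subset_Iio <| hG.monotone hij
  have hreached (i : ℕ) : (g (G i)).reached ⊆ S (i + 1) := fun τ hτ ↦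
    .inr <| mem_biUnion (mem_image_of_mem g (hG i.lt_succ_self)) hτ
  refine Task.sum_mem_target (p := p) (S := S) (n := 0) hmono (fun i σ hσ ↦ ?_) ?_ hT
    (fun Q hQ ↦ .inl (hA Q hQ)) hP hβ (fun l i _ ↦ i.zero_le) hββ
  · exact ((hfollows (G i)).next_subset σ hσ (f i) (hf i)).trans (hreached i)
  · rintro i σ (hσ | hσ)
    · exact hI σ hσ
    · simp only [biUnion_image, mem_iUnion] at hσ
      obtain ⟨F, -, hσ⟩ := hσ
      exact (hsound F).valid hσ

end Stages

theorem linear_comb_polynomial_CST_I_general (m : ℕ) (a : Fin m → ℕ)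
    (p : Ultrafilter ℕ) (hp : IdempotentUF p) (hJ : ∀ B ∈ p, IsPolyJSet B)
    (A : Set ℕ) (hA : A ∈ linComb m a fun _ => p)
    (T : Finset (ℕ → ℕ)) (hT : T.Nonempty) (hTP : ∀ P ∈ T, IsPolyZeroConst P) :
    ∃ (α : Finset (ℕ → ℕ) → ℕ) (H : Finset (ℕ → ℕ) → Finset ℕ),
      (∀ F : Finset (ℕ → ℕ), F.Nonempty → (H F).Nonempty) ∧
      (∀ F G : Finset (ℕ → ℕ), F.Nonempty → F ⊂ G →
        ∀ x ∈ H F, ∀ y ∈ H G, x < y) ∧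
      (∀ G : ℕ → Finset (ℕ → ℕ),
        (∀ i, (G i).Nonempty) → (∀ i j, i < j → G i ⊂ G j) →
        ∀ f : ℕ → ℕ → ℕ, (∀ i, f i ∈ G i) →
        ∀ P : Fin m → ℕ → ℕ, (∀ l, P l ∈ T) →
        ∀ β : Fin m → Finset ℕ,
          (∀ l, (β l).Nonempty) →
          (∀ l l' : Fin m, l < l' → ∀ x ∈ β l, ∀ y ∈ β l', x < y) →
          ∑ l : Fin m, a l * ((∑ i ∈ β l, α (G i)) +
              P l (∑ i ∈ β l, ∑ t ∈ H (G i), f i t)) ∈ A) := by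
  have hI : ∀ σ ∈ Task.mk m a A '' T, σ.Valid p :=
    forall_mem_image.2 fun P hP ↦ ⟨hA, hTP P hP⟩
  obtain ⟨g, hg⟩ := exists_stages hp hJ hTP (T.finite_toSet.image _) hI
  refine ⟨fun F ↦ (g F).shift, fun F ↦ (g F).support, fun F _ ↦ (hg F).1.support_nonempty,
    fun F G _ hFG ↦ (hg G).2.lt _ (mem_image_of_mem g hFG), ?_⟩
  intro G _ hG f hf P hP β hβ hββ
  exact sum_mem_target_of_follows hI (fun F ↦ (hg F).1) (fun F ↦ (hg F).2) hT hG hf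
    (fun Q hQ ↦ mem_image_of_mem _ hQ) hP hβ hββ

/-- Polynomial extension of the linear-combination central sets theorem, single minimal
idempotent. -/
theorem linear_comb_polynomial_CST_I (m : ℕ) (hm : 1 ≤ m) (a : Fin m → ℕ)
    (p : Ultrafilter ℕ) (hp : IsMinimalIdempotent p)
    (A : Set ℕ) (hA : A ∈ linComb m a fun _ => p)
    (T : Finset (ℕ → ℕ)) (hT : T.Nonempty) (hTP : ∀ P ∈ T, IsPolyZeroConst P) :
    ∃ (α : Finset (ℕ → ℕ) → ℕ) (H : Finset (ℕ → ℕ) → Finset ℕ),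
      (∀ F : Finset (ℕ → ℕ), F.Nonempty → (H F).Nonempty) ∧
      (∀ F G : Finset (ℕ → ℕ), F.Nonempty → F ⊂ G →
        ∀ x ∈ H F, ∀ y ∈ H G, x < y) ∧
      (∀ G : ℕ → Finset (ℕ → ℕ),
        (∀ i, (G i).Nonempty) → (∀ i j, i < j → G i ⊂ G j) →
        ∀ f : ℕ → ℕ → ℕ, (∀ i, f i ∈ G i) →
        ∀ P : Fin m → ℕ → ℕ, (∀ l, P l ∈ T) →
        ∀ β : Fin m → Finset ℕ,
          (∀ l, (β l).Nonempty) →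
          (∀ l l' : Fin m, l < l' → ∀ x ∈ β l, ∀ y ∈ β l', x < y) →
          ∑ l : Fin m, a l * ((∑ i ∈ β l, α (G i)) +
              P l (∑ i ∈ β l, ∑ t ∈ H (G i), f i t)) ∈ A) :=
  linear_comb_polynomial_CST_I_general m a p hp.1 (fun _ ↦ hp.isPolyJSet) A hA T hT hTP

end MultiCST
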